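/- Let m ≡_k A_a b with k-sandwiching sequence (A_{a_i} b_i)_{i=1}^n and sandwiching values (m_i)_{i=0}^n, let j ≤ n, and let w = A_d e. Suppose that (1) A_d m_j ≤ w < A_{d+1} m_j, and (2) if j > 0 then w < A_{a_j}(b_j + 1). Then w ≡_k A_d e, and the k-sandwiching sequence of w is (A_{d_i} e_i)_{i=1}^{j+1}, where d_i = a_i and e_i = b_i for 1 ≤ i ≤ j, d_{j+1} = d, and e_{j+1} = e. -/

import Mathlib

/-- The base-`k` Ackermann function `A_a(k, b)`:
`A_0(k, b) = k ^ b` and `A_{a+1}(k, b) = A_a^k(k, A_{a+1}(k, b-1))`,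
with the auxiliary value `A_{a+1}(k, -1) = 1`
(equivalently, `A_{a+1}(k, b) = (A_a^k)^[b+1] (1)`). -/
def Ack (k : ℕ) : ℕ → ℕ → ℕ
  | 0, b => k ^ b
  | a + 1, b => ((Ack k a)^[k])^[b + 1] 1

/-- `IsSandwich k m n a b ms` says that `(A_{a i}(k, b i))_{i=1}^n` is a
`k`-sandwiching sequence for `m`, with sandwiching values `(ms i)_{i=0}^n`:
`ms 0 = 0`; for each `i < n`, `A_{a (i+1)} (ms i) ≤ m < A_{a (i+1) + 1} (ms i)`,
`A_{a (i+1)} (b (i+1)) ≤ m < A_{a (i+1)} (b (i+1) + 1)`, and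
`ms (i+1) = A_{a (i+1)} (b (i+1))`; and `A_0 (ms n) > m`. -/
structure IsSandwich (k m n : ℕ) (a b ms : ℕ → ℕ) : Prop where
  ms_zero : ms 0 = 0
  idx_lo : ∀ i < n, Ack k (a (i + 1)) (ms i) ≤ m
  idx_hi : ∀ i < n, m < Ack k (a (i + 1) + 1) (ms i)
  arg_lo : ∀ i < n, Ack k (a (i + 1)) (b (i + 1)) ≤ m
  arg_hi : ∀ i < n, m < Ack k (a (i + 1)) (b (i + 1) + 1)
  ms_succ : ∀ i < n, ms (i + 1) = Ack k (a (i + 1)) (b (i + 1))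
  halt : m < Ack k 0 (ms n)

/-- `NF k m a b c` says that `m ≡_k A_a b + c`, i.e. `m` has `k`-normal form
`A_a b + c` (so `m = A_a b + c` and the `k`-sandwiching sequence of `m` ends
with the pair `(a, b)`). -/
def NF (k m a b c : ℕ) : Prop :=
  m = Ack k a b + c ∧
    ∃ n as bs ms, 1 ≤ n ∧ IsSandwich k m n as bs ms ∧ a = as n ∧ b = bs n

theorem ack_basic (k : ℕ) (hk : 2 ≤ k) (a : ℕ) :
    StrictMono (Ack k a) ∧ ∀ x, x < Ack k a x := by
  induction a with
  | zero =>
    refine ⟨fun x y h => ?_, fun x => ?_⟩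
    · simp only [Ack]
      exact Nat.pow_lt_pow_right (by omega) h
    · simp only [Ack]
      exact Nat.lt_pow_self (by omega)
  | succ a ih =>
    obtain ⟨hm, hl⟩ := ih
    have hit : ∀ n x, x ≤ (Ack k a)^[n] x := by
      intro n
      induction n with
      | zero => intro x; simp
      | succ n ihn =>
        intro x
        rw [Function.iterate_succ_apply']
        exact (ihn x).trans (hl _).le
    have hF : ∀ x, x < (Ack k a)^[k] x := by
      intro x
      obtain ⟨k', hk'⟩ : ∃ k', k = k' + 1 := ⟨k - 1, by omega⟩
      have : (Ack k a)^[k] x = Ack k a ((Ack k a)^[k'] x) := by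
        conv_lhs => rw [show (Ack k a)^[k] = (Ack k a)^[k' + 1] from by rw [← hk']]
        rw [Function.iterate_succ_apply']
      rw [this]
      exact (hit k' x).trans_lt (hl _)
    have hG : StrictMono (fun n => ((Ack k a)^[k])^[n] 1) := by
      apply strictMono_nat_of_lt_succ
      intro n
      rw [Function.iterate_succ_apply']
      exact hF _
    refine ⟨fun x y h => ?_, fun x => ?_⟩
    · simp only [Ack]
      exact hG (by omega)
    · simp only [Ack]
      exact lt_of_lt_of_le (Nat.lt_succ_self x) (hG.le_apply (x := x + 1))

theorem ack_range_succ (k : ℕ) (hk : 2 ≤ k) (a x : ℕ) :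
    ∃ y, x ≤ y ∧ Ack k (a + 1) x = Ack k a y := by
  obtain ⟨hm, hl⟩ := ack_basic k hk a
  have hit : ∀ n x, x ≤ (Ack k a)^[n] x := by
    intro n
    induction n with
    | zero => intro x; simp
    | succ n ihn =>
      intro x
      rw [Function.iterate_succ_apply']
      exact (ihn x).trans (hl _).le
  obtain ⟨k', hk'⟩ : ∃ k', k = k' + 1 := ⟨k - 1, by omega⟩
  refine ⟨(Ack k a)^[k'] (((Ack k a)^[k])^[x] 1), ?_, ?_⟩
  · refine le_trans ?_ (hit _ _)
    cases x with
    | zero => simp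
    | succ x => exact (ack_basic k hk (a + 1)).2 x
  · rw [← Function.iterate_succ_apply' (Ack k a) k', Nat.succ_eq_add_one, ← hk',
      ← Function.iterate_succ_apply' ((Ack k a)^[k]) x]
    simp only [Ack]

theorem ack_range (k : ℕ) (hk : 2 ≤ k) (c a : ℕ) (h : c ≤ a) :
    ∀ x, ∃ y, x ≤ y ∧ Ack k a x = Ack k c y := by
  induction a, h using Nat.le_induction with
  | base => exact fun x => ⟨x, le_rfl, rfl⟩
  | succ a _ ih =>
    intro x
    obtain ⟨y, hy, e⟩ := ack_range_succ k hk a x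
    obtain ⟨z, hz, e'⟩ := ih y
    exact ⟨z, hy.trans hz, e.trans e'⟩

theorem ack_bump (k : ℕ) (hk : 2 ≤ k) (c a x b m : ℕ) (h : c ≤ a) (h1 : Ack k c b ≤ m)
    (h2 : m < Ack k a x) : Ack k c (b + 1) ≤ Ack k a x := by
  obtain ⟨y, _, e⟩ := ack_range k hk c a h x
  have hm := (ack_basic k hk c).1
  rw [e] at h2 ⊢
  exact hm.monotone (hm.lt_iff_lt.1 (h1.trans_lt h2))

theorem Ack_mono_idx (k : ℕ) (hk : 2 ≤ k) (c a x : ℕ) (h : c ≤ a) :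
    Ack k c x ≤ Ack k a x := by
  obtain ⟨y, hy, e⟩ := ack_range k hk c a h x
  rw [e]
  exact (ack_basic k hk c).1.monotone hy

theorem stmt_4 (k m n j d e : ℕ) (a b ms : ℕ → ℕ) (hk : 2 ≤ k) (hn : 1 ≤ n)
    (hs : IsSandwich k m n a b ms) (hm : m = Ack k (a n) (b n)) (hjn : j ≤ n)
    (hw1 : Ack k d (ms j) ≤ Ack k d e) (hw2 : Ack k d e < Ack k (d + 1) (ms j))
    (hw3 : 0 < j → Ack k d e < Ack k (a j) (b j + 1)) :
    NF k (Ack k d e) d e 0 ∧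
      ∃ d' e' ws, IsSandwich k (Ack k d e) (j + 1) d' e' ws ∧
        (∀ i, 1 ≤ i → i ≤ j → d' i = a i ∧ e' i = b i) ∧
        d' (j + 1) = d ∧ e' (j + 1) = e := by
  have hsm := fun c => (ack_basic k hk c).1
  have hlt := fun c => (ack_basic k hk c).2
  have hstep : ∀ i < n, Ack k (a (i + 1)) (ms i) ≤ ms (i + 1) := by
    intro i hi
    rw [hs.ms_succ i hi]
    have := (hsm _).lt_iff_lt.1 ((hs.idx_lo i hi).trans_lt (hs.arg_hi i hi))
    exact (hsm _).monotone (by omega)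
  have hmono : ∀ i j, i ≤ j → j ≤ n → ms i ≤ ms j := by
    intro i j h
    induction j, h using Nat.le_induction with
    | base => exact fun _ => le_rfl
    | succ j _ ih =>
      intro hj
      exact (ih (by omega)).trans ((hlt _ _).le.trans (hstep j (by omega)))
  have hmw : ms j ≤ Ack k d e := (hlt d _).le.trans hw1
  have hdec : ∀ i j, i ≤ j → j < n →
      Ack k (a (j + 1)) (b (j + 1) + 1) ≤ Ack k (a (i + 1)) (b (i + 1) + 1) := by
    intro i j h
    induction j, h using Nat.le_induction with
    | base => exact fun _ => le_rfl
    | succ j _ ih =>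
      intro hj
      refine le_trans ?_ (ih (by omega))
      refine ack_bump k hk _ _ _ _ m ?_ (hs.arg_lo (j + 1) hj) (hs.arg_hi j (by omega))
      by_contra hc
      have h1 := (hs.idx_lo (j + 1) hj).trans_lt (hs.arg_hi j (by omega))
      have h2 := Ack_mono_idx k hk (a (j + 1)) (a (j + 1 + 1)) (ms (j + 1)) (by omega)
      have h3 := (hsm _).lt_iff_lt.1 (h2.trans_lt h1)
      rw [hs.ms_succ j (by omega)] at h3
      have h4 := hlt (a (j + 1)) (b (j + 1))
      omega
  have hahi : ∀ i < j, Ack k d e < Ack k (a (i + 1)) (b (i + 1) + 1) := by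
    intro i hi
    obtain ⟨j', rfl⟩ : ∃ j', j = j' + 1 := ⟨j - 1, by omega⟩
    exact (hw3 (by omega)).trans_le (hdec i j' (by omega) (by omega))
  have key : ∃ d' e' ws, IsSandwich k (Ack k d e) (j + 1) d' e' ws ∧
        (∀ i, 1 ≤ i → i ≤ j → d' i = a i ∧ e' i = b i) ∧
        d' (j + 1) = d ∧ e' (j + 1) = e := by
    refine ⟨fun i => if i ≤ j then a i else d, fun i => if i ≤ j then b i else e,
      fun i => if i ≤ j then ms i else Ack k d e, ?_, ?_, by simp, by simp⟩
    · constructor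
      · simp [hs.ms_zero]
      · intro i hi
        rcases Nat.lt_succ_iff_lt_or_eq.1 hi with h | rfl
        · simp only [Nat.succ_le_of_lt h, h.le, if_true]
          exact (hstep i (by omega)).trans ((hmono (i + 1) j h hjn).trans hmw)
        · simpa using hw1
      · intro i hi
        rcases Nat.lt_succ_iff_lt_or_eq.1 hi with h | rfl
        · simp only [Nat.succ_le_of_lt h, h.le, if_true]
          exact (hahi i h).trans_le (ack_bump k hk _ _ _ _ m (by omega)
            (hs.arg_lo i (by omega)) (hs.idx_hi i (by omega)))
        · simpa using hw2
      · intro i hi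
        rcases Nat.lt_succ_iff_lt_or_eq.1 hi with h | rfl
        · simp only [Nat.succ_le_of_lt h, if_true]
          rw [← hs.ms_succ i (by omega)]
          exact (hmono (i + 1) j h hjn).trans hmw
        · simp
      · intro i hi
        rcases Nat.lt_succ_iff_lt_or_eq.1 hi with h | rfl
        · simp only [Nat.succ_le_of_lt h, if_true]
          exact hahi i h
        · simpa using hsm d (Nat.lt_succ_self e)
      · intro i hi
        rcases Nat.lt_succ_iff_lt_or_eq.1 hi with h | rfl
        · simp only [Nat.succ_le_of_lt h, if_true]
          exact hs.ms_succ i (by omega)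
        · simp
      · simpa using hlt 0 (Ack k d e)
    · intro i _ hi
      simp [hi]
  refine ⟨⟨rfl, ?_⟩, key⟩
  obtain ⟨d', e', ws, h, _, h1, h2⟩ := key
  exact ⟨j + 1, d', e', ws, by omega, h, h1.symm, h2.symm⟩
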